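/- Let d ≥ 1 be an integer, M ∈ (0,∞], m a mobility on [0,M), and let P : [0,M) → ℝ be nondecreasing, locally absolutely continuous, with P(0) = 0 and P'·m' locally integrable on [0,M), satisfying the generalized McCann condition: for some H₀ ≥ 0 and H(r) := H₀ + ∫₀^r P'(z)·m'(z) dz one has P'(r)·m(r) ≥ (1 − 1/d)·H(r) ≥ 0 for almost every r ∈ (0,M). Fix 0 < M' < M'' < M. Then there exist sequences (P_n) and (m_n) of functions on [0, M''] such that: (i) P_n ≥ P on [0,M''] and each P_n is strictly increasing; (ii) m_n ≥ m on [0,M''] and each m_n is concave; (iii) the restrictions of P_n and m_n to [M', M''] are C^∞; (iv) for each n there is H_{0,n} ≥ 0 such that, with H_n(r) := H_{0,n} + ∫₀^r P_n'(z)·m_n'(z) dz, one has P_n'(r)·m_n(r) ≥ (1 − 1/d)·H_n(r) ≥ 0 for almost every r ∈ (0, M''); (v) P_n → P and m_n → m uniformly on [M', M''] as n → ∞. Moreover, if P' is integrable in a right neighborhood of 0, one can take M' = 0. -/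

import Mathlib

open Set MeasureTheory ENNReal
open Filter Topology
open scoped ContDiff

/-!
Write `α = 1 - 1 / d`, `g = m'`, `p = P'` and `K = H * m ^ (-α)`, and call `q = p - α * H / m` the
slack. Since `H' = p * g`, one finds `K' = q * g * m ^ (-α)` and `p = q + α * K * m ^ (α - 1)`, so
`m`, `K` and `P` are recovered from `(q, g)` by successive integrations, and the McCann condition
says exactly that `q ≥ 0` and `K ≥ 0`. The constraint is thereby reduced to sign conditions on data
that can be approximated independently: `q` in `L¹` by positive smooth functions, and the antitone
`g` by mollification. Each integration is stable under such convergence, and enlarging its constant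
turns the approximants into uniformly convergent majorants, which keeps `K ≥ 0` and `m > 0`.

Translating by a small `δ > 0` and adding a small constant to `m` beforehand removes the possible
degeneracy of `m` at `0`, and only enlarges `P`.
-/

/-- The primitive of `f` with value `c` at `0`. -/
noncomputable def primitive (c : ℝ) (f : ℝ → ℝ) (r : ℝ) : ℝ :=
  c + ∫ z in (0:ℝ)..r, f z

section Primitive

variable {b c : ℝ} {f : ℝ → ℝ}

@[simp]
lemma primitive_zero (c : ℝ) (f : ℝ → ℝ) : primitive c f 0 = c := by
  simp [primitive]

lemma primitive_congr {h : ℝ → ℝ} (hfh : EqOn f h (uIcc 0 b)) :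
    primitive c f b = primitive c h b := by
  simp only [primitive, intervalIntegral.integral_congr hfh]

lemma intervalIntegrable_of_mem_Icc {a r : ℝ} (hf : IntervalIntegrable f volume a b)
    (hr : r ∈ Icc a b) : IntervalIntegrable f volume a r :=
  hf.mono_set (uIcc_subset_uIcc left_mem_uIcc (Icc_subset_uIcc hr))

lemma hasDerivWithinAt_primitive (hf : ContinuousOn f (Icc 0 b)) {x : ℝ} (hx : x ∈ Icc 0 b) :
    HasDerivWithinAt (primitive c f) (f x) (Icc 0 b) x := by
  have hf_int : IntervalIntegrable f volume 0 x :=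
    (hf.mono (uIcc_of_le hx.1 ▸ Icc_subset_Icc_right hx.2)).intervalIntegrable
  have : Fact (x ∈ Icc 0 b) := ⟨hx⟩
  exact (intervalIntegral.integral_hasDerivWithinAt_right hf_int
    (hf.stronglyMeasurableAtFilter_nhdsWithin measurableSet_Icc x) (hf x hx)).const_add c

lemma contDiffOn_primitive (hb : 0 < b) (hf : ContDiffOn ℝ ∞ f (Icc 0 b)) :
    ContDiffOn ℝ ∞ (primitive c f) (Icc 0 b) := by
  have hderiv : ∀ x ∈ Icc 0 b, HasDerivWithinAt (primitive c f) (f x) (Icc 0 b) x :=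
    fun x hx => hasDerivWithinAt_primitive hf.continuousOn hx
  rw [contDiffOn_infty_iff_derivWithin (uniqueDiffOn_Icc hb)]
  exact ⟨fun x hx => (hderiv x hx).differentiableWithinAt,
    hf.congr fun x hx => (hderiv x hx).derivWithin (uniqueDiffOn_Icc hb x hx)⟩

lemma absolutelyContinuousOnInterval_primitive (hf : IntervalIntegrable f volume 0 b) :
    AbsolutelyContinuousOnInterval (primitive c f) 0 b :=
  ((LipschitzWith.const c).lipschitzOnWith.absolutelyContinuousOnInterval).add
    (hf.absolutelyContinuousOnInterval_intervalIntegral left_mem_uIcc)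

lemma continuousOn_primitive (hb : 0 ≤ b) (hf : IntervalIntegrable f volume 0 b) :
    ContinuousOn (primitive c f) (Icc 0 b) :=
  uIcc_of_le hb ▸ (absolutelyContinuousOnInterval_primitive hf).continuousOn

lemma ae_hasDerivAt_primitive (hf : IntervalIntegrable f volume 0 b) :
    ∀ᵐ x, x ∈ uIcc 0 b → HasDerivAt (primitive c f) (f x) x := by
  filter_upwards [hf.ae_hasDerivAt_integral] with x hx hxb
  exact (hx hxb 0 left_mem_uIcc).const_add c

lemma absolutelyContinuousOnInterval_comp_of_lipschitzOnWith {X Y : Type*} [PseudoMetricSpace X]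
    [PseudoMetricSpace Y] {K : NNReal} {φ : X → Y} {s : Set X} {u : ℝ → X} {a b : ℝ}
    (hφ : LipschitzOnWith K φ s) (hu : AbsolutelyContinuousOnInterval u a b)
    (hmaps : MapsTo u (uIcc a b) s) : AbsolutelyContinuousOnInterval (φ ∘ u) a b := by
  rw [absolutelyContinuousOnInterval_iff] at hu ⊢
  intro ε hε
  obtain ⟨δ, hδ, hsum⟩ := hu (ε / (K + 1)) (by positivity)
  refine ⟨δ, hδ, fun E hE hlength => ?_⟩
  calc ∑ i ∈ Finset.range E.1, dist (φ (u (E.2 i).1)) (φ (u (E.2 i).2))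
      ≤ ∑ i ∈ Finset.range E.1, K * dist (u (E.2 i).1) (u (E.2 i).2) :=
        Finset.sum_le_sum fun i hi =>
          hφ.dist_le_mul _ (hmaps (hE.1 i hi).1) _ (hmaps (hE.1 i hi).2)
    _ = K * ∑ i ∈ Finset.range E.1, dist (u (E.2 i).1) (u (E.2 i).2) := by rw [Finset.mul_sum]
    _ ≤ K * (ε / (K + 1)) := by gcongr; exact (hsum E hE hlength).le
    _ < (K + 1) * (ε / (K + 1)) := by gcongr; linarith
    _ = ε := by field

lemma absolutelyContinuousOnInterval_rpow {u : ℝ → ℝ} {a b : ℝ} (β : ℝ)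
    (hu : AbsolutelyContinuousOnInterval u a b) (hu₀ : ∀ z ∈ uIcc a b, u z ≠ 0) :
    AbsolutelyContinuousOnInterval (fun z => u z ^ β) a b := by
  have himage : ∀ v ∈ u '' uIcc a b, v ≠ 0 := by
    rintro _ ⟨z, hz, rfl⟩
    exact hu₀ z hz
  obtain ⟨K, hK⟩ := (contDiffOn_id.rpow_const_of_ne (p := β) himage).exists_lipschitzOnWith
    one_ne_zero (isPreconnected_uIcc.image u hu.continuousOn).ordConnected.convex
    (isCompact_uIcc.image_of_continuousOn hu.continuousOn)
  exact absolutelyContinuousOnInterval_comp_of_lipschitzOnWith hK hu (mapsTo_image _ _)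

lemma primitive_mul_rpow_primitive (u₀ m₀ β : ℝ) {g : ℝ → ℝ}
    (hf : IntervalIntegrable f volume 0 b) (hg : IntervalIntegrable g volume 0 b)
    (hm : ∀ z ∈ uIcc 0 b, primitive m₀ g z ≠ 0) :
    primitive u₀ f b * primitive m₀ g b ^ β =
      primitive (u₀ * m₀ ^ β) (fun z => f z * primitive m₀ g z ^ β +
        primitive u₀ f z * (g z * β * primitive m₀ g z ^ (β - 1))) b := by
  have hac : AbsolutelyContinuousOnInterval
      (fun z => primitive u₀ f z * primitive m₀ g z ^ β) 0 b :=
    (absolutelyContinuousOnInterval_primitive hf).fun_mul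
      (absolutelyContinuousOnInterval_rpow β (absolutelyContinuousOnInterval_primitive hg) hm)
  have hderiv : ∀ᵐ z, z ∈ uIoc 0 b →
      deriv (fun z => primitive u₀ f z * primitive m₀ g z ^ β) z =
        f z * primitive m₀ g z ^ β + primitive u₀ f z * (g z * β * primitive m₀ g z ^ (β - 1)) := by
    filter_upwards [ae_hasDerivAt_primitive (c := u₀) hf, ae_hasDerivAt_primitive (c := m₀) hg]
      with z hu hm' hz
    have hz' := uIoc_subset_uIcc hz
    exact ((hu hz').mul ((hm' hz').rpow_const (Or.inl (hm z hz')))).deriv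
  have hftc := hac.integral_deriv_eq_sub
  rw [intervalIntegral.integral_congr_ae hderiv, primitive_zero, primitive_zero] at hftc
  exact (eq_sub_iff_add_eq'.1 hftc).symm

end Primitive

section Convergence

variable {X : Type*} [MeasurableSpace X] {μ : Measure X} {F G A B : ℕ → X → ℝ} {f g a b : X → ℝ}

/-- Convergence in `L¹(μ)` of integrable real functions, with representatives kept explicit. -/
structure TendstoL1 (μ : Measure X) (F : ℕ → X → ℝ) (f : X → ℝ) : Prop where
  integrable_seq : ∀ n, Integrable (F n) μ
  integrable : Integrable f μ
  tendsto_integral_abs_sub : Tendsto (fun n => ∫ x, |F n x - f x| ∂μ) atTop (𝓝 0)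

/-- Almost everywhere convergence of a uniformly bounded sequence: the multipliers preserving
`TendstoL1`. -/
structure TendstoBoundedly (μ : Measure X) (A : ℕ → X → ℝ) (a : X → ℝ) : Prop where
  aestronglyMeasurable : ∀ n, AEStronglyMeasurable (A n) μ
  exists_bound : ∃ C, ∀ n, ∀ᵐ x ∂μ, ‖A n x‖ ≤ C
  ae_tendsto : ∀ᵐ x ∂μ, Tendsto (fun n => A n x) atTop (𝓝 (a x))

lemma TendstoL1.add (hF : TendstoL1 μ F f) (hG : TendstoL1 μ G g) :
    TendstoL1 μ (fun n x => F n x + G n x) (fun x => f x + g x) where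
  integrable_seq n := (hF.integrable_seq n).add (hG.integrable_seq n)
  integrable := hF.integrable.add hG.integrable
  tendsto_integral_abs_sub := by
    have hF_abs n : Integrable (fun x => |F n x - f x|) μ :=
      ((hF.integrable_seq n).sub hF.integrable).abs
    have hG_abs n : Integrable (fun x => |G n x - g x|) μ :=
      ((hG.integrable_seq n).sub hG.integrable).abs
    refine squeeze_zero (fun n => integral_nonneg fun x => abs_nonneg _) (fun n => ?_)
      (by simpa using hF.tendsto_integral_abs_sub.add hG.tendsto_integral_abs_sub)
    rw [← integral_add (hF_abs n) (hG_abs n)]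
    refine integral_mono_of_nonneg (.of_forall fun x => abs_nonneg _)
      ((hF_abs n).add (hG_abs n)) (.of_forall fun x => ?_)
    simpa only [add_sub_add_comm] using abs_add_le (F n x - f x) (G n x - g x)

lemma TendstoBoundedly.mul (hA : TendstoBoundedly μ A a) (hB : TendstoBoundedly μ B b) :
    TendstoBoundedly μ (fun n x => A n x * B n x) (fun x => a x * b x) where
  aestronglyMeasurable n := (hA.aestronglyMeasurable n).mul (hB.aestronglyMeasurable n)
  exists_bound := by
    obtain ⟨C, hC⟩ := hA.exists_bound
    obtain ⟨D, hD⟩ := hB.exists_bound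
    refine ⟨C * D, fun n => ?_⟩
    filter_upwards [hC n, hD n] with x hx hx'
    exact (norm_mul_le _ _).trans
      (mul_le_mul hx hx' (norm_nonneg _) ((norm_nonneg _).trans hx))
  ae_tendsto := by
    filter_upwards [hA.ae_tendsto, hB.ae_tendsto] with x hx hx' using hx.mul hx'

lemma tendstoBoundedly_const [IsFiniteMeasure μ] (c : ℝ) :
    TendstoBoundedly μ (fun _ _ => c) (fun _ => c) :=
  ⟨fun _ => aestronglyMeasurable_const, ⟨‖c‖, fun _ => .of_forall fun _ => le_rfl⟩,
    .of_forall fun _ => tendsto_const_nhds⟩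

lemma TendstoBoundedly.tendstoL1_mul (hA : TendstoBoundedly μ A a) (hf : Integrable f μ) :
    TendstoL1 μ (fun n x => f x * A n x) (fun x => f x * a x) := by
  obtain ⟨C, hC⟩ := hA.exists_bound
  have ha_meas : AEStronglyMeasurable a μ :=
    aestronglyMeasurable_of_tendsto_ae _ hA.aestronglyMeasurable hA.ae_tendsto
  have ha_bound : ∀ᵐ x ∂μ, ‖a x‖ ≤ C := by
    filter_upwards [hA.ae_tendsto, ae_all_iff.2 hC] with x hx hCx
    exact le_of_tendsto hx.norm (.of_forall hCx)
  have hfA n : Integrable (fun x => f x * A n x) μ :=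
    hf.mul_bdd (hA.aestronglyMeasurable n) (hC n)
  have hfa : Integrable (fun x => f x * a x) μ := hf.mul_bdd ha_meas ha_bound
  refine ⟨hfA, hfa, ?_⟩
  rw [← integral_zero X ℝ (μ := μ)]
  refine tendsto_integral_of_dominated_convergence (fun x => ‖f x‖ * (C + C))
    (fun n => ((hfA n).sub hfa).abs.aestronglyMeasurable) (hf.norm.mul_const _)
    (fun n => ?_) ?_
  · filter_upwards [hC n, ha_bound] with x hx hax
    rw [norm_abs_eq_norm, ← mul_sub, norm_mul]
    gcongr
    exact (norm_sub_le _ _).trans (add_le_add hx hax)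
  · filter_upwards [hA.ae_tendsto] with x hx
    simpa using ((hx.const_mul (f x)).sub_const (f x * a x)).abs

lemma TendstoBoundedly.tendstoL1 [IsFiniteMeasure μ] (hA : TendstoBoundedly μ A a) :
    TendstoL1 μ A a := by
  simpa using hA.tendstoL1_mul (integrable_const (1 : ℝ))

lemma TendstoL1.mul (hF : TendstoL1 μ F f) (hA : TendstoBoundedly μ A a) :
    TendstoL1 μ (fun n x => F n x * A n x) (fun x => f x * a x) := by
  obtain ⟨C, hC⟩ := hA.exists_bound
  have hdiff n : Integrable (fun x => F n x - f x) μ := (hF.integrable_seq n).sub hF.integrable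
  have hdiff_mul : TendstoL1 μ (fun n x => (F n x - f x) * A n x) 0 := by
    refine ⟨fun n => (hdiff n).mul_bdd (hA.aestronglyMeasurable n) (hC n), integrable_zero _ _ _,
      squeeze_zero (fun n => integral_nonneg fun x => abs_nonneg _) (fun n => ?_)
        (by simpa using hF.tendsto_integral_abs_sub.mul_const C)⟩
    rw [← integral_mul_const]
    refine integral_mono_of_nonneg (.of_forall fun x => abs_nonneg _)
      ((hdiff n).abs.mul_const C) ?_
    filter_upwards [hC n] with x hx
    simpa [abs_mul] using mul_le_mul_of_nonneg_left hx (abs_nonneg (F n x - f x))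
  simpa [sub_mul] using hdiff_mul.add (hA.tendstoL1_mul hF.integrable)

end Convergence

section Majorants

variable {b : ℝ} {F : ℕ → ℝ → ℝ} {f : ℝ → ℝ}

lemma abs_integral_sub_integral_le {h : ℝ → ℝ} (hf : IntegrableOn f (Ioc 0 b))
    (hh : IntegrableOn h (Ioc 0 b)) {r : ℝ} (hr : r ∈ Icc 0 b) :
    |(∫ z in (0:ℝ)..r, f z) - ∫ z in (0:ℝ)..r, h z| ≤ ∫ z in Ioc 0 b, |f z - h z| := by
  have hsub : Ioc 0 r ⊆ Ioc 0 b := Ioc_subset_Ioc_right hr.2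
  rw [intervalIntegral.integral_of_le hr.1, intervalIntegral.integral_of_le hr.1,
    ← integral_sub (hf.mono_set hsub) (hh.mono_set hsub)]
  exact (abs_integral_le_integral_abs).trans (setIntegral_mono_set (hf.sub hh).abs
    (.of_forall fun _ => abs_nonneg _) hsub.eventuallyLE)

/-- Uniform convergence to `f` on `[0, b]` by majorants of `f`. -/
def TendstoFromAbove (b : ℝ) (F : ℕ → ℝ → ℝ) (f : ℝ → ℝ) : Prop :=
  ∃ e : ℕ → ℝ, Tendsto e atTop (𝓝 0) ∧ ∀ n, ∀ r ∈ Icc 0 b, F n r ∈ Icc (f r) (f r + e n)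

lemma TendstoFromAbove.le (h : TendstoFromAbove b F f) (n : ℕ)
    {r : ℝ} (hr : r ∈ Icc 0 b) : f r ≤ F n r :=
  let ⟨_, _, hF⟩ := h
  (hF n r hr).1

lemma TendstoFromAbove.congr {f' : ℝ → ℝ} (h : TendstoFromAbove b F f)
    (hff' : EqOn f f' (Icc 0 b)) : TendstoFromAbove b F f' := by
  obtain ⟨e, he, hF⟩ := h
  exact ⟨e, he, fun n r hr => hff' hr ▸ hF n r hr⟩

lemma TendstoFromAbove.eventually_le_add (h : TendstoFromAbove b F f)
    {ε : ℝ} (hε : 0 < ε) : ∀ᶠ n in atTop, ∀ r ∈ Icc 0 b, F n r ≤ f r + ε := by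
  obtain ⟨e, he, hF⟩ := h
  filter_upwards [he.eventually_le_const hε] with n hn r hr
  exact (hF n r hr).2.trans (add_le_add_right hn _)

lemma TendstoFromAbove.tendstoUniformlyOn (h : TendstoFromAbove b F f) :
    TendstoUniformlyOn F f atTop (Icc 0 b) := by
  refine Metric.tendstoUniformlyOn_iff.2 fun ε hε => ?_
  filter_upwards [h.eventually_le_add (half_pos hε)] with n hn r hr
  rw [Real.dist_eq, abs_sub_lt_iff]
  constructor <;> linarith [hn r hr, h.le n hr]

lemma TendstoL1.exists_tendstoFromAbove (h : TendstoL1 (volume.restrict (Ioc 0 b)) F f) (c₀ : ℝ) :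
    ∃ c : ℕ → ℝ, TendstoFromAbove b (fun n => primitive (c n) (F n)) (primitive c₀ f) := by
  refine ⟨fun n => c₀ + ∫ z in Ioc 0 b, |F n z - f z|, fun n => 2 * ∫ z in Ioc 0 b, |F n z - f z|,
    by simpa using h.tendsto_integral_abs_sub.const_mul 2, fun n r hr => ?_⟩
  have := abs_le.1 (abs_integral_sub_integral_le (h.integrable_seq n) h.integrable hr)
  constructor <;> simp only [primitive] <;> linarith

lemma TendstoFromAbove.tendstoBoundedly_comp {φ : ℝ → ℝ} {s : Set ℝ}
    (h : TendstoFromAbove b F f) (hb : 0 ≤ b) (hf : ContinuousOn f (Icc 0 b))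
    (hF : ∀ n, ContinuousOn (F n) (Icc 0 b)) (hφ : ContinuousOn φ s)
    (hs : ∀ r ∈ Icc 0 b, Ici (f r) ⊆ s) :
    TendstoBoundedly (volume.restrict (Ioc 0 b)) (fun n r => φ (F n r)) (fun r => φ (f r)) := by
  have hFs n : MapsTo (F n) (Icc 0 b) s := fun r hr => hs r hr (h.le n hr)
  refine ⟨fun n => ?_, ?_, ?_⟩
  · exact ((hφ.comp (hF n) (hFs n)).mono Ioc_subset_Icc_self).aestronglyMeasurable
      measurableSet_Ioc
  · obtain ⟨x, hx, hx_min⟩ := isCompact_Icc.exists_isMinOn (nonempty_Icc.2 hb) hf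
    obtain ⟨y, -, hy_max⟩ := isCompact_Icc.exists_isMaxOn (nonempty_Icc.2 hb) hf
    obtain ⟨e, he, hmem⟩ := h
    obtain ⟨E, hE⟩ := he.bddAbove_range
    obtain ⟨C, hC⟩ := (isCompact_Icc (a := f x) (b := f y + E)).exists_bound_of_continuousOn
      (hφ.mono (Icc_subset_Ici_self.trans (hs x hx)))
    refine ⟨C, fun n => (ae_restrict_iff' measurableSet_Ioc).2 (.of_forall fun r hr => ?_)⟩
    have hr' := Ioc_subset_Icc_self hr
    exact hC _ ⟨(hx_min hr').trans (hmem n r hr').1,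
      (hmem n r hr').2.trans (add_le_add (hy_max hr') (hE (mem_range_self n)))⟩
  · refine (ae_restrict_iff' measurableSet_Ioc).2 (.of_forall fun r hr => ?_)
    have hr' := Ioc_subset_Icc_self hr
    exact (hφ (f r) (hs r hr' self_mem_Ici)).tendsto.comp (tendsto_nhdsWithin_iff.2
      ⟨h.tendstoUniformlyOn.tendsto_at hr', .of_forall fun n => hFs n hr'⟩)

end Majorants

section Smoothing

lemma exists_contDiff_pos_integral_abs_sub_le {E : Type*} [NormedAddCommGroup E] [NormedSpace ℝ E]
    [FiniteDimensional ℝ E] [MeasurableSpace E] [BorelSpace E] {μ : Measure E} [IsFiniteMeasure μ]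
    {f : E → ℝ} (hf : Integrable f μ) (hf₀ : 0 ≤ᵐ[μ] f) {ε : ℝ} (hε : 0 < ε) :
    ∃ g : E → ℝ, ContDiff ℝ ∞ g ∧ (∀ x, 0 < g x) ∧ Integrable g μ ∧
      ∫ x, |g x - f x| ∂μ ≤ ε := by
  set δ := ε / (1 + 2 * μ.real univ) with hδ_def
  have hδ : 0 < δ := by positivity
  obtain ⟨h, -, hh, hh_cont, hh_int⟩ := hf.exists_hasCompactSupport_integral_sub_le hδ
  have hmax_cont : Continuous fun x => max (h x) 0 := hh_cont.max continuous_const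
  obtain ⟨g, hg, hg_near, -⟩ := hmax_cont.exists_contDiff_approx ⊤ (ε := fun _ => δ)
    continuous_const fun _ => hδ
  have hg_abs x : |g x - max (h x) 0| < δ := hg_near x
  have hg_int : Integrable g μ := by
    refine (hh_int.norm.add (integrable_const δ)).mono' hg.continuous.aestronglyMeasurable
      (.of_forall fun x => ?_)
    have hmax : |max (h x) 0| ≤ |h x| := by simpa using abs_max_sub_max_le_abs (h x) 0 0
    have := abs_sub_abs_le_abs_sub (g x) (max (h x) 0)
    exact (by linarith [hg_abs x] : |g x| ≤ |h x| + δ)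
  have hdiff_int : Integrable (fun x => ‖f x - h x‖) μ := (hf.sub hh_int).norm
  refine ⟨fun x => g x + δ, hg.add contDiff_const, fun x => ?_,
    hg_int.add (integrable_const δ), ?_⟩
  · linarith [(abs_lt.1 (hg_abs x)).1, le_max_right (h x) 0]
  calc ∫ x, |g x + δ - f x| ∂μ ≤ ∫ x, (‖f x - h x‖ + 2 * δ) ∂μ := by
        refine integral_mono_of_nonneg (.of_forall fun x => abs_nonneg _)
          (hdiff_int.add (integrable_const _)) ?_
        filter_upwards [hf₀] with x hx
        have hmax : |max (h x) 0 - f x| ≤ |f x - h x| := by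
          simpa [max_eq_left (show 0 ≤ f x from hx), abs_sub_comm]
            using abs_max_sub_max_le_abs (f x) (h x) 0
        have hg_lt := abs_lt.1 (hg_abs x)
        rw [Real.norm_eq_abs]
        rw [abs_le] at hmax ⊢
        constructor <;> linarith
    _ = (∫ x, ‖f x - h x‖ ∂μ) + μ.real univ * (2 * δ) := by
        rw [integral_add hdiff_int (integrable_const _), integral_const, smul_eq_mul]
    _ ≤ δ + μ.real univ * (2 * δ) := by gcongr
    _ = ε := by rw [hδ_def]; field

lemma exists_contDiff_pos_tendstoL1 {E : Type*} [NormedAddCommGroup E] [NormedSpace ℝ E]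
    [FiniteDimensional ℝ E] [MeasurableSpace E] [BorelSpace E] {μ : Measure E} [IsFiniteMeasure μ]
    {f : E → ℝ} (hf : Integrable f μ) (hf₀ : 0 ≤ᵐ[μ] f) :
    ∃ F : ℕ → E → ℝ, (∀ n, ContDiff ℝ ∞ (F n)) ∧ (∀ n x, 0 < F n x) ∧ TendstoL1 μ F f := by
  choose F hF_smooth hF_pos hF_int hF_le using fun n : ℕ =>
    exists_contDiff_pos_integral_abs_sub_le hf hf₀ (Nat.one_div_pos_of_nat (α := ℝ) (n := n))
  exact ⟨F, hF_smooth, hF_pos, hF_int, hf, squeeze_zero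
    (fun n => integral_nonneg fun x => abs_nonneg _) hF_le tendsto_one_div_add_atTop_nhds_zero_nat⟩

section BumpConvolution

open scoped Convolution

variable {g : ℝ → ℝ} (φ : ContDiffBump (0 : ℝ))

lemma integrable_bump_mul_comp_sub (hg : Antitone g) (x : ℝ) :
    Integrable fun t => φ.normed volume t * g (x - t) :=
  φ.hasCompactSupport_normed.convolutionExists_left (ContinuousLinearMap.lsmul ℝ ℝ)
    φ.continuous_normed hg.locallyIntegrable x

lemma antitone_bump_convolution (hg : Antitone g) :
    Antitone (φ.normed volume ⋆[ContinuousLinearMap.lsmul ℝ ℝ, volume] g) := fun x y hxy =>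
  integral_mono (integrable_bump_mul_comp_sub φ hg y) (integrable_bump_mul_comp_sub φ hg x)
    fun t => mul_le_mul_of_nonneg_left (hg (by gcongr)) (φ.nonneg_normed t)

lemma bump_convolution_mem_Icc (hg : Antitone g) (x : ℝ) :
    (φ.normed volume ⋆[ContinuousLinearMap.lsmul ℝ ℝ, volume] g) x ∈
      Icc (g (x + φ.rOut)) (g (x - φ.rOut)) := by
  have hint_const c : Integrable (fun t => φ.normed volume t * c) := φ.integrable_normed.mul_const c
  have hconst c : ∫ t, φ.normed volume t * c = c := by
    rw [integral_mul_const, φ.integral_normed, one_mul]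
  have hmul_le {t y z : ℝ} (h : |t| < φ.rOut → y ≤ z) :
      φ.normed volume t * y ≤ φ.normed volume t * z := by
    rcases eq_or_ne (φ.normed volume t) 0 with ht | ht
    · simp [ht]
    have ht_ball : t ∈ Metric.ball 0 φ.rOut := by rwa [← φ.support_normed_eq (μ := volume)]
    exact mul_le_mul_of_nonneg_left (h (by simpa using ht_ball)) (φ.nonneg_normed t)
  constructor
  · refine (hconst (g (x + φ.rOut))).symm.trans_le (integral_mono (hint_const _)
      (integrable_bump_mul_comp_sub φ hg x) fun t => hmul_le fun ht => hg ?_)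
    linarith [(abs_lt.1 ht).1]
  · refine (integral_mono (integrable_bump_mul_comp_sub φ hg x) (hint_const _)
      fun t => hmul_le fun ht => hg ?_).trans_eq (hconst (g (x - φ.rOut)))
    linarith [(abs_lt.1 ht).2]

end BumpConvolution

open scoped Convolution in
lemma exists_contDiff_antitone_ae_tendsto {g : ℝ → ℝ} (hg : Antitone g) :
    ∃ G : ℕ → ℝ → ℝ, (∀ n, ContDiff ℝ ∞ (G n)) ∧ (∀ n, Antitone (G n)) ∧
      (∀ n x, G n x ∈ Icc (g (x + 1)) (g (x - 1))) ∧
      ∀ᵐ x, Tendsto (fun n => G n x) atTop (𝓝 (g x)) := by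
  let φ (n : ℕ) : ContDiffBump (0 : ℝ) :=
    ⟨1 / (n + 1) / 2, 1 / (n + 1), by positivity, half_lt_self (by positivity)⟩
  have hrOut n : (φ n).rOut ≤ 1 := div_le_one_of_le₀ (by simp) (by positivity)
  refine ⟨fun n => (φ n).normed volume ⋆[ContinuousLinearMap.lsmul ℝ ℝ, volume] g,
    fun n => (φ n).hasCompactSupport_normed.contDiff_convolution_left _
      (φ n).contDiff_normed hg.locallyIntegrable,
    fun n => antitone_bump_convolution (φ n) hg,
    fun n x => Icc_subset_Icc (hg (by gcongr; exact hrOut n)) (hg (by gcongr; exact hrOut n))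
      (bump_convolution_mem_Icc (φ n) hg x), ?_⟩
  exact ContDiffBump.ae_convolution_tendsto_right_of_locallyIntegrable (K := 2)
    tendsto_one_div_add_atTop_nhds_zero_nat
    (.of_forall fun n => (mul_div_cancel₀ _ two_ne_zero).ge) hg.locallyIntegrable

lemma exists_contDiff_antitone_tendstoBoundedly {g : ℝ → ℝ} (hg : Antitone g) (b : ℝ) :
    ∃ G : ℕ → ℝ → ℝ, (∀ n, ContDiff ℝ ∞ (G n)) ∧ (∀ n, Antitone (G n)) ∧
      TendstoBoundedly (volume.restrict (Ioc 0 b)) G g := by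
  obtain ⟨G, hG_smooth, hG_anti, hG_mem, hG_lim⟩ := exists_contDiff_antitone_ae_tendsto hg
  refine ⟨G, hG_smooth, hG_anti, fun n => (hG_smooth n).continuous.aestronglyMeasurable,
    ⟨max |g (b + 1)| |g (-1)|, fun n => ?_⟩, ae_restrict_of_ae hG_lim⟩
  refine (ae_restrict_iff' measurableSet_Ioc).2 (.of_forall fun x hx => ?_)
  exact abs_le_max_abs_abs ((hg (by linarith [hx.2])).trans (hG_mem n x).1)
    ((hG_mem n x).2.trans (hg (by linarith [hx.1])))

end Smoothing

section Slack

/-- The condition `GMC(m, d)` at the point `r`, with `α = 1 - 1 / d` and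
`H r = H₀ + ∫ z in 0..r, p z * m' z`; here `p` and `m'` are the densities of `P` and `m`. -/
def McCannAt (α H₀ : ℝ) (m m' p : ℝ → ℝ) (r : ℝ) : Prop :=
  α * primitive H₀ (fun z => p z * m' z) r ≤ p r * m r ∧ 0 ≤ primitive H₀ (fun z => p z * m' z) r

/-- The quotient `K = H / m ^ α` of the McCann function by a power of the mobility
`m = primitive m₀ g`, expressed through the slack `q = P' - α * H / m`. -/
noncomputable def mcCannQuotient (α m₀ K₀ : ℝ) (q g : ℝ → ℝ) : ℝ → ℝ :=
  primitive K₀ fun z => q z * (g z * primitive m₀ g z ^ (-α))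

/-- The density `P' = q + α * K * m ^ (α - 1)` recovered from the slack `q`. -/
noncomputable def slackDensity (α m₀ K₀ : ℝ) (q g : ℝ → ℝ) (z : ℝ) : ℝ :=
  q z + α * (mcCannQuotient α m₀ K₀ q g z * primitive m₀ g z ^ (α - 1))

/-- A pair `(P, m)` with densities `(p, m')` as in the conclusion of the smoothing theorem: smooth
up to the boundary of `[0, b]`, with `P` strictly increasing, `m` concave, and the McCann condition
holding at every interior point. -/
structure SmoothMcCannPair (α b H₀ : ℝ) (P p m m' : ℝ → ℝ) : Prop where
  strictMonoOn : StrictMonoOn P (Icc 0 b)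
  concaveOn : ConcaveOn ℝ (Icc 0 b) m
  contDiffOn_pressure : ContDiffOn ℝ ∞ P (Icc 0 b)
  contDiffOn_mobility : ContDiffOn ℝ ∞ m (Icc 0 b)
  const_nonneg : 0 ≤ H₀
  hasDerivAt_pressure : ∀ r ∈ Ioo 0 b, HasDerivAt P (p r) r
  hasDerivAt_mobility : ∀ r ∈ Ioo 0 b, HasDerivAt m (m' r) r
  mcCannAt : ∀ r ∈ Ioo 0 b, McCannAt α H₀ m m' p r

variable {α b m₀ K₀ : ℝ} {q g p : ℝ → ℝ}

lemma primitive_slackDensity_mul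
    (hf : IntervalIntegrable (fun z => q z * (g z * primitive m₀ g z ^ (-α))) volume 0 b)
    (hg : IntervalIntegrable g volume 0 b) (hm : ∀ z ∈ uIcc 0 b, 0 < primitive m₀ g z) :
    primitive (K₀ * m₀ ^ α) (fun z => slackDensity α m₀ K₀ q g z * g z) b =
      mcCannQuotient α m₀ K₀ q g b * primitive m₀ g b ^ α := by
  refine .trans (primitive_congr fun z hz => ?_)
    (primitive_mul_rpow_primitive K₀ m₀ α hf hg fun z hz => (hm z hz).ne').symm
  have hrpow : primitive m₀ g z ^ (-α) * primitive m₀ g z ^ α = 1 := by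
    rw [← Real.rpow_add (hm z hz), neg_add_cancel, Real.rpow_zero]
  simp only [slackDensity, mcCannQuotient]
  linear_combination -(q z * g z) * hrpow

lemma mcCannQuotient_slack (α m₀ H₀ : ℝ)
    (hpg : IntervalIntegrable (fun z => p z * g z) volume 0 b)
    (hg : IntervalIntegrable g volume 0 b) (hm : ∀ z ∈ uIcc 0 b, 0 < primitive m₀ g z) :
    mcCannQuotient α m₀ (H₀ * m₀ ^ (-α))
        (fun z => p z - α * (primitive H₀ (fun z => p z * g z) z / primitive m₀ g z)) g b =
      primitive H₀ (fun z => p z * g z) b * primitive m₀ g b ^ (-α) := by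
  rw [primitive_mul_rpow_primitive H₀ m₀ (-α) hpg hg fun z hz => (hm z hz).ne']
  refine primitive_congr fun z hz => ?_
  simp only [Real.rpow_sub_one (hm z hz).ne']
  ring

lemma slackDensity_slack (α m₀ H₀ : ℝ)
    (hpg : IntervalIntegrable (fun z => p z * g z) volume 0 b)
    (hg : IntervalIntegrable g volume 0 b) (hm : ∀ z ∈ uIcc 0 b, 0 < primitive m₀ g z) :
    slackDensity α m₀ (H₀ * m₀ ^ (-α))
      (fun z => p z - α * (primitive H₀ (fun z => p z * g z) z / primitive m₀ g z)) g b = p b := by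
  have hb := hm b right_mem_uIcc
  have hrpow : primitive m₀ g b ^ (-α) * primitive m₀ g b ^ (α - 1) = (primitive m₀ g b)⁻¹ := by
    rw [← Real.rpow_add hb, neg_add_eq_sub, sub_sub_cancel_left, Real.rpow_neg_one]
  rw [slackDensity, mcCannQuotient_slack α m₀ H₀ hpg hg hm, mul_assoc, hrpow, div_eq_mul_inv]
  ring

lemma mcCannAt_slackDensity (hq_pos : 0 < q b) (hm : ∀ z ∈ uIcc 0 b, 0 < primitive m₀ g z)
    (hf : IntervalIntegrable (fun z => q z * (g z * primitive m₀ g z ^ (-α))) volume 0 b)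
    (hg : IntervalIntegrable g volume 0 b) (hK : 0 ≤ mcCannQuotient α m₀ K₀ q g b) :
    McCannAt α (K₀ * m₀ ^ α) (primitive m₀ g) g (slackDensity α m₀ K₀ q g) b := by
  have hmb := hm b right_mem_uIcc
  rw [McCannAt, primitive_slackDensity_mul hf hg hm]
  refine ⟨?_, mul_nonneg hK (Real.rpow_nonneg hmb.le _)⟩
  have hrpow : primitive m₀ g b ^ (α - 1) * primitive m₀ g b = primitive m₀ g b ^ α := by
    rw [Real.rpow_sub_one hmb.ne', div_mul_cancel₀ _ hmb.ne']
  calc α * (mcCannQuotient α m₀ K₀ q g b * primitive m₀ g b ^ α)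
    _ ≤ q b * primitive m₀ g b + α * (mcCannQuotient α m₀ K₀ q g b * primitive m₀ g b ^ α) :=
        le_add_of_nonneg_left (mul_pos hq_pos hmb).le
    _ = slackDensity α m₀ K₀ q g b * primitive m₀ g b := by rw [slackDensity, ← hrpow]; ring

lemma contDiffOn_slackIntegrand (hb : 0 < b) (hq : ContDiff ℝ ∞ q) (hg : ContDiff ℝ ∞ g)
    (hm : ∀ r ∈ Icc 0 b, 0 < primitive m₀ g r) :
    ContDiffOn ℝ ∞ (fun z => q z * (g z * primitive m₀ g z ^ (-α))) (Icc 0 b) :=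
  hq.contDiffOn.mul (hg.contDiffOn.mul
    ((contDiffOn_primitive hb hg.contDiffOn).rpow_const_of_ne fun r hr => (hm r hr).ne'))

lemma contDiffOn_slackDensity (hb : 0 < b) (hq : ContDiff ℝ ∞ q) (hg : ContDiff ℝ ∞ g)
    (hm : ∀ r ∈ Icc 0 b, 0 < primitive m₀ g r) :
    ContDiffOn ℝ ∞ (slackDensity α m₀ K₀ q g) (Icc 0 b) :=
  hq.contDiffOn.add (contDiffOn_const.mul
    ((contDiffOn_primitive hb (contDiffOn_slackIntegrand hb hq hg hm)).mul
      ((contDiffOn_primitive hb hg.contDiffOn).rpow_const_of_ne fun r hr => (hm r hr).ne')))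

lemma slackDensity_pos {r : ℝ} (hα : 0 ≤ α) (hq_pos : 0 < q r) (hm : 0 ≤ primitive m₀ g r)
    (hK : 0 ≤ mcCannQuotient α m₀ K₀ q g r) : 0 < slackDensity α m₀ K₀ q g r :=
  add_pos_of_pos_of_nonneg hq_pos (mul_nonneg hα (mul_nonneg hK (Real.rpow_nonneg hm _)))

lemma smoothMcCannPair_of_slack (hb : 0 < b) (hα : 0 ≤ α) (P₀ : ℝ) (hq : ContDiff ℝ ∞ q)
    (hq_pos : ∀ x, 0 < q x) (hg : ContDiff ℝ ∞ g) (hg_anti : Antitone g)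
    (hm : ∀ r ∈ Icc 0 b, 0 < primitive m₀ g r)
    (hK : ∀ r ∈ Icc 0 b, 0 ≤ mcCannQuotient α m₀ K₀ q g r) :
    SmoothMcCannPair α b (K₀ * m₀ ^ α) (primitive P₀ (slackDensity α m₀ K₀ q g))
      (slackDensity α m₀ K₀ q g) (primitive m₀ g) g := by
  have hp_smooth : ContDiffOn ℝ ∞ (slackDensity α m₀ K₀ q g) (Icc 0 b) :=
    contDiffOn_slackDensity hb hq hg hm
  have hP_smooth := contDiffOn_primitive (c := P₀) hb hp_smooth
  have hm_smooth : ContDiffOn ℝ ∞ (primitive m₀ g) (Icc 0 b) :=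
    contDiffOn_primitive hb hg.contDiffOn
  have hP_deriv : ∀ r ∈ Ioo 0 b, HasDerivAt (primitive P₀ (slackDensity α m₀ K₀ q g))
      (slackDensity α m₀ K₀ q g r) r := fun r hr =>
    (hasDerivWithinAt_primitive hp_smooth.continuousOn (Ioo_subset_Icc_self hr)).hasDerivAt
      (Icc_mem_nhds hr.1 hr.2)
  have hm_deriv : ∀ r ∈ Ioo 0 b, HasDerivAt (primitive m₀ g) (g r) r := fun r hr =>
    (hasDerivWithinAt_primitive hg.continuous.continuousOn (Ioo_subset_Icc_self hr)).hasDerivAt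
      (Icc_mem_nhds hr.1 hr.2)
  refine ⟨?_, ?_, hP_smooth, hm_smooth, ?_, hP_deriv, hm_deriv, fun r hr => ?_⟩
  · refine strictMonoOn_of_deriv_pos (convex_Icc 0 b) hP_smooth.continuousOn fun r hr => ?_
    rw [interior_Icc] at hr
    have hr' := Ioo_subset_Icc_self hr
    exact (hP_deriv r hr).deriv ▸ slackDensity_pos hα (hq_pos r) (hm r hr').le (hK r hr')
  · refine AntitoneOn.concaveOn_of_deriv (convex_Icc 0 b) hm_smooth.continuousOn ?_ ?_ <;>
      rw [interior_Icc]
    · exact fun r hr => (hm_deriv r hr).differentiableAt.differentiableWithinAt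
    · exact (hg_anti.antitoneOn _).congr fun r hr => (hm_deriv r hr).deriv.symm
  · have h0 : (0 : ℝ) ∈ Icc 0 b := left_mem_Icc.2 hb.le
    simpa [mcCannQuotient] using mul_nonneg (hK 0 h0) (Real.rpow_nonneg (hm 0 h0).le α)
  · have hIcc : uIcc 0 r ⊆ Icc 0 b := by
      rw [uIcc_of_le hr.1.le]; exact Icc_subset_Icc_right hr.2.le
    exact mcCannAt_slackDensity (hq_pos r) (fun z hz => hm z (hIcc hz))
      ((contDiffOn_slackIntegrand hb hq hg hm).continuousOn.mono hIcc).intervalIntegrable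
      (hg.continuous.intervalIntegrable 0 r) (hK r (Ioo_subset_Icc_self hr))

end Slack

section Stability

variable {b m₀ : ℝ} {Q G : ℕ → ℝ → ℝ} {q g : ℝ → ℝ}

lemma TendstoFromAbove.tendstoBoundedly_rpow_primitive {mₙ : ℕ → ℝ} (β : ℝ) (hb : 0 ≤ b)
    (hG : TendstoL1 (volume.restrict (Ioc 0 b)) G g) (hm : ∀ r ∈ Icc 0 b, 0 < primitive m₀ g r)
    (h : TendstoFromAbove b (fun n => primitive (mₙ n) (G n)) (primitive m₀ g)) :
    TendstoBoundedly (volume.restrict (Ioc 0 b)) (fun n r => primitive (mₙ n) (G n) r ^ β)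
      (fun r => primitive m₀ g r ^ β) := by
  have hint {f : ℝ → ℝ} : IntegrableOn f (Ioc 0 b) → IntervalIntegrable f volume 0 b :=
    (intervalIntegrable_iff_integrableOn_Ioc_of_le hb).2
  exact h.tendstoBoundedly_comp (s := Ioi 0) (φ := fun x => x ^ β) hb
    (continuousOn_primitive hb (hint hG.integrable))
    (fun n => continuousOn_primitive hb (hint (hG.integrable_seq n)))
    (fun x hx => (Real.continuousAt_rpow_const x β (.inl (mem_Ioi.1 hx).ne')).continuousWithinAt)
    fun r hr => Ici_subset_Ioi.2 (hm r hr)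

lemma exists_slack_tendstoFromAbove (α K₀ P₀ : ℝ) (hb : 0 ≤ b)
    (hQ : TendstoL1 (volume.restrict (Ioc 0 b)) Q q)
    (hG : TendstoBoundedly (volume.restrict (Ioc 0 b)) G g)
    (hm : ∀ r ∈ Icc 0 b, 0 < primitive m₀ g r) :
    ∃ mₙ Kₙ Pₙ : ℕ → ℝ,
      TendstoFromAbove b (fun n => primitive (mₙ n) (G n)) (primitive m₀ g) ∧
      TendstoFromAbove b (fun n => mcCannQuotient α (mₙ n) (Kₙ n) (Q n) (G n))
        (mcCannQuotient α m₀ K₀ q g) ∧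
      TendstoFromAbove b (fun n => primitive (Pₙ n) (slackDensity α (mₙ n) (Kₙ n) (Q n) (G n)))
        (primitive P₀ (slackDensity α m₀ K₀ q g)) := by
  obtain ⟨mₙ, hmₙ⟩ := hG.tendstoL1.exists_tendstoFromAbove m₀
  have hrpow (β : ℝ) := hmₙ.tendstoBoundedly_rpow_primitive β hb hG.tendstoL1 hm
  have hK' := hQ.mul (hG.mul (hrpow (-α)))
  obtain ⟨Kₙ, hKₙ⟩ := hK'.exists_tendstoFromAbove K₀
  have hint {f : ℝ → ℝ} : IntegrableOn f (Ioc 0 b) → IntervalIntegrable f volume 0 b :=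
    (intervalIntegrable_iff_integrableOn_Ioc_of_le hb).2
  have hK := hKₙ.tendstoBoundedly_comp (s := univ) (φ := id) hb
    (continuousOn_primitive hb (hint hK'.integrable))
    (fun n => continuousOn_primitive hb (hint (hK'.integrable_seq n)))
    continuousOn_id fun _ _ => subset_univ _
  have hp := hQ.add ((tendstoBoundedly_const α).mul (hK.mul (hrpow (α - 1)))).tendstoL1
  obtain ⟨Pₙ, hPₙ⟩ := hp.exists_tendstoFromAbove P₀
  exact ⟨mₙ, Kₙ, Pₙ, hmₙ, hKₙ, hPₙ⟩

end Stability

section AntitoneDerivative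

/-- A pair satisfying the McCann condition on `(0, b]` whose mobility `m = primitive m₀ g` is
positive up to `0` and has an everywhere defined antitone derivative `g`, the pressure entering
only through its density `p`. -/
structure AntitoneMcCannData (α b m₀ H₀ : ℝ) (g p : ℝ → ℝ) : Prop where
  antitone : Antitone g
  integrableOn : IntegrableOn p (Ioc 0 b)
  mobility_pos : ∀ r ∈ Icc 0 b, 0 < primitive m₀ g r
  mcCann_nonneg : ∀ r ∈ Icc 0 b, 0 ≤ primitive H₀ (fun z => p z * g z) r
  ae_le : ∀ᵐ r ∂volume.restrict (Ioc 0 b),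
    α * primitive H₀ (fun z => p z * g z) r ≤ p r * primitive m₀ g r

variable {α b m₀ H₀ : ℝ} {g p : ℝ → ℝ}

lemma AntitoneMcCannData.intervalIntegrable_mul (h : AntitoneMcCannData α b m₀ H₀ g p)
    (hb : 0 ≤ b) : IntervalIntegrable (fun z => p z * g z) volume 0 b := by
  obtain ⟨G, -, -, hG⟩ := exists_contDiff_antitone_tendstoBoundedly h.antitone b
  rw [intervalIntegrable_iff_integrableOn_Ioc_of_le hb]
  exact (hG.tendstoL1_mul h.integrableOn).integrable

lemma AntitoneMcCannData.integrable_slack (h : AntitoneMcCannData α b m₀ H₀ g p) (hb : 0 ≤ b) :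
    IntegrableOn (fun z => p z - α * (primitive H₀ (fun z => p z * g z) z / primitive m₀ g z))
      (Ioc 0 b) := by
  have hcont : ContinuousOn
      (fun z => α * (primitive H₀ (fun z => p z * g z) z / primitive m₀ g z)) (Icc 0 b) :=
    continuousOn_const.mul ((continuousOn_primitive hb (h.intervalIntegrable_mul hb)).div
      (continuousOn_primitive hb h.antitone.intervalIntegrable)
      fun r hr => (h.mobility_pos r hr).ne')
  exact h.integrableOn.sub (hcont.integrableOn_Icc.mono_set Ioc_subset_Icc_self)

lemma AntitoneMcCannData.slack_nonneg (h : AntitoneMcCannData α b m₀ H₀ g p) :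
    0 ≤ᵐ[volume.restrict (Ioc 0 b)]
      fun z => p z - α * (primitive H₀ (fun z => p z * g z) z / primitive m₀ g z) := by
  filter_upwards [h.ae_le, ae_restrict_mem measurableSet_Ioc] with z hz hzb
  rw [Pi.zero_apply, sub_nonneg, ← mul_div_assoc,
    div_le_iff₀ (h.mobility_pos z (Ioc_subset_Icc_self hzb))]
  exact hz

theorem AntitoneMcCannData.exists_smoothMcCannPair (h : AntitoneMcCannData α b m₀ H₀ g p)
    (hb : 0 < b) (hα : 0 ≤ α) (P₀ : ℝ) :
    ∃ (P p' m m' : ℕ → ℝ → ℝ) (H : ℕ → ℝ),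
      (∀ n, SmoothMcCannPair α b (H n) (P n) (p' n) (m n) (m' n)) ∧
      TendstoFromAbove b P (primitive P₀ p) ∧ TendstoFromAbove b m (primitive m₀ g) := by
  obtain ⟨Q, hQ_smooth, hQ_pos, hQ⟩ :=
    exists_contDiff_pos_tendstoL1 (h.integrable_slack hb.le) h.slack_nonneg
  obtain ⟨G, hG_smooth, hG_anti, hG⟩ := exists_contDiff_antitone_tendstoBoundedly h.antitone b
  obtain ⟨mₙ, Kₙ, Pₙ, hm, hK, hP⟩ :=
    exists_slack_tendstoFromAbove α (H₀ * m₀ ^ (-α)) P₀ hb.le hQ hG h.mobility_pos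
  have hIcc {r : ℝ} (hr : r ∈ Icc 0 b) : uIcc 0 r ⊆ Icc 0 b :=
    uIcc_of_le hr.1 ▸ Icc_subset_Icc_right hr.2
  have hpg {r : ℝ} (hr : r ∈ Icc 0 b) : IntervalIntegrable (fun z => p z * g z) volume 0 r :=
    intervalIntegrable_of_mem_Icc (h.intervalIntegrable_mul hb.le) hr
  have hm_pos {r : ℝ} (hr : r ∈ Icc 0 b) : ∀ z ∈ uIcc 0 r, 0 < primitive m₀ g z :=
    fun z hz => h.mobility_pos z (hIcc hr hz)
  have hK_nonneg (n : ℕ) : ∀ r ∈ Icc 0 b, 0 ≤ mcCannQuotient α (mₙ n) (Kₙ n) (Q n) (G n) r := by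
    intro r hr
    refine le_trans ?_ (hK.le n hr)
    rw [mcCannQuotient_slack α m₀ H₀ (hpg hr) h.antitone.intervalIntegrable (hm_pos hr)]
    exact mul_nonneg (h.mcCann_nonneg r hr) (Real.rpow_nonneg (h.mobility_pos r hr).le _)
  refine ⟨_, _, _, _, _, fun n => smoothMcCannPair_of_slack hb hα (Pₙ n) (hQ_smooth n) (hQ_pos n)
    (hG_smooth n) (hG_anti n) (fun r hr => (h.mobility_pos r hr).trans_le (hm.le n hr))
    (hK_nonneg n), hP.congr fun r hr => primitive_congr fun z hz => ?_, hm⟩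
  have hz' := hIcc hr hz
  exact slackDensity_slack α m₀ H₀ (hpg hz') h.antitone.intervalIntegrable (hm_pos hz')

end AntitoneDerivative

section Shift

/-- A mobility `m` and a pressure `P` on `[0, c]` satisfying the McCann condition almost everywhere,
with `P` given as a primitive of its density `p` and `m'` a version of the derivative of `m`. -/
structure McCannPair (α c H₀ : ℝ) (P p m m' : ℝ → ℝ) : Prop where
  continuousOn_mobility : ContinuousOn m (Icc 0 c)
  concaveOn : ConcaveOn ℝ (Icc 0 c) m
  mobility_pos : ∀ r ∈ Ioo 0 c, 0 < m r
  ae_hasDerivAt : ∀ᵐ r, r ∈ Ioo 0 c → HasDerivAt m (m' r) r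
  intervalIntegrable : IntervalIntegrable p volume 0 c
  intervalIntegrable_mul : IntervalIntegrable (fun z => p z * m' z) volume 0 c
  eqOn_primitive : EqOn P (primitive (P 0) p) (Icc 0 c)
  ae_mcCannAt : ∀ᵐ r, r ∈ Ioo 0 c → McCannAt α H₀ m m' p r

variable {α b c H₀ : ℝ} {P p m m' : ℝ → ℝ}

lemma nonneg_of_ae_nonneg_Ioo {f : ℝ → ℝ} (hf : ContinuousOn f (Ioo b c))
    (h : ∀ᵐ r, r ∈ Ioo b c → 0 ≤ f r) : ∀ r ∈ Ioo b c, 0 ≤ f r := by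
  have hae : f =ᵐ[volume.restrict (Ioo b c)] fun r => |f r| := by
    refine (ae_restrict_iff' measurableSet_Ioo).2 ?_
    filter_upwards [h] with r hr hrbc using (abs_of_nonneg (hr hrbc)).symm
  exact fun r hr => (abs_nonneg _).trans_eq (Measure.eqOn_Ioo_of_ae_eq _ hae hf hf.abs hr).symm

lemma primitive_comp_add_right {f : ℝ → ℝ} {δ r a : ℝ}
    (hδ : IntervalIntegrable f volume 0 δ) (hr : IntervalIntegrable f volume 0 (r + δ)) :
    primitive (primitive a f δ) (fun z => f (z + δ)) r = primitive a f (r + δ) := by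
  simp only [primitive, intervalIntegral.integral_comp_add_right, zero_add, add_assoc,
    ← intervalIntegral.integral_interval_sub_left hr hδ, add_sub_cancel]

lemma exists_antitone_hasDerivWithinAt_Ioi_of_concaveOn {s : Set ℝ} (hbc : b ≤ c)
    (hm : ConcaveOn ℝ s m) (hs : Icc b c ⊆ interior s) :
    ∃ g : ℝ → ℝ, Antitone g ∧ ∀ x ∈ Icc b c, HasDerivWithinAt m (g x) (Ioi x) x := by
  have hderiv_anti : AntitoneOn (fun x => derivWithin m (Ioi x) x) (Icc b c) := by
    simpa [derivWithin.neg] using (hm.neg.monotoneOn_rightDeriv.mono hs).neg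
  obtain ⟨g, hg, hg_eq⟩ := hderiv_anti.exists_antitone_extension
    (hderiv_anti.map_bddAbove subset_rfl ⟨c, fun x hx => hx.2, right_mem_Icc.2 hbc⟩)
    (hderiv_anti.map_bddBelow subset_rfl ⟨b, fun x hx => hx.1, left_mem_Icc.2 hbc⟩)
  refine ⟨g, hg, fun x hx => hg_eq hx ▸ ?_⟩
  have hdiff := (hm.neg.differentiableWithinAt_Ioi_of_mem_interior (hs hx)).neg
  rw [neg_neg] at hdiff
  exact hdiff.hasDerivWithinAt

lemma McCannPair.mcCann_nonneg (h : McCannPair α c H₀ P p m m') :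
    ∀ r ∈ Ioo 0 c, 0 ≤ primitive H₀ (fun z => p z * m' z) r := by
  rcases le_total 0 c with hc | hc
  · refine nonneg_of_ae_nonneg_Ioo
      ((continuousOn_primitive hc h.intervalIntegrable_mul).mono Ioo_subset_Icc_self) ?_
    filter_upwards [h.ae_mcCannAt] with r hr hrc using (hr hrc).2
  · simp [Ioo_eq_empty hc.not_gt]

lemma McCannPair.density_nonneg (h : McCannPair α c H₀ P p m m') (hα : 0 ≤ α) :
    ∀ᵐ r, r ∈ Ioo 0 c → 0 ≤ p r := by
  filter_upwards [h.ae_mcCannAt] with r hr hrc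
  exact nonneg_of_mul_nonneg_left ((mul_nonneg hα (hr hrc).2).trans (hr hrc).1)
    (h.mobility_pos r hrc)

lemma McCannPair.continuousOn_pressure (h : McCannPair α c H₀ P p m m') (hc : 0 ≤ c) :
    ContinuousOn P (Icc 0 c) :=
  (continuousOn_primitive hc h.intervalIntegrable).congr h.eqOn_primitive

lemma McCannPair.monotoneOn_pressure (h : McCannPair α c H₀ P p m m') (hα : 0 ≤ α) :
    MonotoneOn P (Icc 0 c) := by
  intro x hx y hy hxy
  rw [h.eqOn_primitive hx, h.eqOn_primitive hy, primitive, primitive]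
  have hp : 0 ≤ᵐ[volume.restrict (Ioc 0 y)] p := by
    rw [← restrict_Ioo_eq_restrict_Ioc]
    refine (ae_restrict_iff' measurableSet_Ioo).2 ?_
    filter_upwards [h.density_nonneg hα] with r hr hry using hr ⟨hry.1, hry.2.trans_le hy.2⟩
  gcongr
  exact intervalIntegral.integral_mono_interval le_rfl hx.1 hxy hp
    (intervalIntegrable_of_mem_Icc h.intervalIntegrable hy)

lemma McCannPair.primitive_shift_pressure {δ r : ℝ} (h : McCannPair α c H₀ P p m m')
    (hδ : δ ∈ Icc 0 c) (hr : r + δ ∈ Icc 0 c) :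
    primitive (P δ) (fun z => p (z + δ)) r = P (r + δ) := by
  rw [h.eqOn_primitive hδ, h.eqOn_primitive hr]
  exact primitive_comp_add_right (intervalIntegrable_of_mem_Icc h.intervalIntegrable hδ)
    (intervalIntegrable_of_mem_Icc h.intervalIntegrable hr)

lemma McCannPair.exists_antitone_shift_derivative {δ : ℝ} (h : McCannPair α c H₀ P p m m')
    (hb : 0 ≤ b) (hδ : 0 < δ) (hc : b + δ < c) :
    ∃ g : ℝ → ℝ, Antitone g ∧ (∀ᵐ r, r ∈ Icc 0 b → g r = m' (r + δ)) ∧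
      ∀ r ∈ Icc 0 b, ∀ η, primitive (m δ + η) g r = m (r + δ) + η := by
  have hsub : Icc δ (b + δ) ⊆ Ioo 0 c := Icc_subset_Ioo hδ hc
  obtain ⟨g, hg, hg_deriv⟩ := exists_antitone_hasDerivWithinAt_Ioi_of_concaveOn
    (le_add_of_nonneg_left hb) h.concaveOn (interior_Icc (α := ℝ) ▸ hsub)
  refine ⟨fun r => g (r + δ), fun x y hxy => hg (add_le_add_left hxy δ), ?_, fun r hr η => ?_⟩
  · filter_upwards [(measurePreserving_add_right volume δ).quasiMeasurePreserving.ae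
      h.ae_hasDerivAt] with r hr hrb
    have hrδ : r + δ ∈ Icc δ (b + δ) := ⟨by linarith [hrb.1], by linarith [hrb.2]⟩
    exact (uniqueDiffWithinAt_Ioi _).eq_deriv _ (hg_deriv _ hrδ) (hr (hsub hrδ)).hasDerivWithinAt
  · have hrδ : δ ≤ r + δ := by linarith [hr.1]
    have hsub' : Icc δ (r + δ) ⊆ Icc δ (b + δ) := Icc_subset_Icc_right (by linarith [hr.2])
    have hFTC := intervalIntegral.integral_eq_sub_of_hasDeriv_right_of_le hrδ
      (h.continuousOn_mobility.mono (hsub'.trans (hsub.trans Ioo_subset_Icc_self)))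
      (fun x hx => hg_deriv x (hsub' (Ioo_subset_Icc_self hx))) hg.intervalIntegrable
    rw [primitive, intervalIntegral.integral_comp_add_right, zero_add, hFTC]
    ring

lemma McCannPair.primitive_shift_mul {δ r : ℝ} {g : ℝ → ℝ} (h : McCannPair α c H₀ P p m m')
    (hr₀ : 0 ≤ r) (hδ : δ ∈ Icc 0 c) (hr : r + δ ∈ Icc 0 c)
    (hg : ∀ᵐ z, z ∈ Icc 0 r → g z = m' (z + δ)) :
    primitive (primitive H₀ (fun z => p z * m' z) δ) (fun z => p (z + δ) * g z) r =
      primitive H₀ (fun z => p z * m' z) (r + δ) := by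
  rw [← primitive_comp_add_right (intervalIntegrable_of_mem_Icc h.intervalIntegrable_mul hδ)
    (intervalIntegrable_of_mem_Icc h.intervalIntegrable_mul hr)]
  refine congrArg _ (intervalIntegral.integral_congr_ae ?_)
  filter_upwards [hg] with z hz hzr
  rw [uIoc_of_le hr₀] at hzr
  rw [hz (Ioc_subset_Icc_self hzr)]

lemma McCannPair.intervalIntegrable_shift {δ : ℝ} (h : McCannPair α c H₀ P p m m')
    (hδ : δ ∈ Icc 0 c) (hb : b + δ ∈ Icc 0 c) :
    IntervalIntegrable (fun z => p (z + δ)) volume 0 b := by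
  rw [IntervalIntegrable.comp_add_right_iff, zero_add]
  exact h.intervalIntegrable.mono_set
    (uIcc_subset_uIcc (Icc_subset_uIcc hδ) (Icc_subset_uIcc hb))

lemma McCannPair.exists_shift {δ η : ℝ} (h : McCannPair α c H₀ P p m m') (hα : 0 ≤ α)
    (hb : 0 ≤ b) (hδ : 0 < δ) (hc : b + δ < c) (hη : 0 ≤ η) :
    ∃ H₁ g, AntitoneMcCannData α b (m δ + η) H₁ g (fun z => p (z + δ)) ∧
      ∀ r ∈ Icc 0 b, primitive (m δ + η) g r = m (r + δ) + η := by
  obtain ⟨g, hg_anti, hg_deriv, hg_prim⟩ := h.exists_antitone_shift_derivative hb hδ hc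
  have hshift {r : ℝ} (hr : r ∈ Icc 0 b) : r + δ ∈ Ioo 0 c :=
    ⟨by linarith [hr.1], by linarith [hr.2]⟩
  have hδc : δ ∈ Icc 0 c := ⟨hδ.le, by linarith⟩
  have hH : ∀ r ∈ Icc 0 b, primitive (primitive H₀ (fun z => p z * m' z) δ)
      (fun z => p (z + δ) * g z) r = primitive H₀ (fun z => p z * m' z) (r + δ) := fun r hr =>
    h.primitive_shift_mul hr.1 hδc (Ioo_subset_Icc_self (hshift hr))
      (hg_deriv.mono fun z hz hzr => hz ⟨hzr.1, hzr.2.trans hr.2⟩)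
  refine ⟨primitive H₀ (fun z => p z * m' z) δ, g,
    ⟨hg_anti, ?_, fun r hr => ?_, fun r hr => ?_, ?_⟩, fun r hr => hg_prim r hr η⟩
  · exact (intervalIntegrable_iff_integrableOn_Ioc_of_le hb).1
      (h.intervalIntegrable_shift hδc (Ioo_subset_Icc_self (hshift (right_mem_Icc.2 hb))))
  · rw [hg_prim r hr]
    exact add_pos_of_pos_of_nonneg (h.mobility_pos _ (hshift hr)) hη
  · rw [hH r hr]
    exact h.mcCann_nonneg _ (hshift hr)
  · have hquasi := (measurePreserving_add_right volume δ).quasiMeasurePreserving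
    refine (ae_restrict_iff' measurableSet_Ioc).2 ?_
    filter_upwards [hquasi.ae h.ae_mcCannAt, hquasi.ae (h.density_nonneg hα)] with r hr hpr hrb
    have hrb' := Ioc_subset_Icc_self hrb
    rw [hH r hrb', hg_prim r hrb']
    exact (hr (hshift hrb')).1.trans
      (mul_le_mul_of_nonneg_left (le_add_of_nonneg_right hη) (hpr (hshift hrb')))

end Shift

section Approximation

variable {α b c H₀ : ℝ} {P p m m' : ℝ → ℝ}

lemma eventually_abs_comp_add_sub_lt {f : ℝ → ℝ} (hf : ContinuousOn f (Icc 0 c)) {ε : ℝ}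
    (hε : 0 < ε) : ∀ᶠ δ in 𝓝[>] (0 : ℝ), ∀ r, r ∈ Icc 0 c → r + δ ∈ Icc 0 c →
      |f (r + δ) - f r| < ε := by
  obtain ⟨ρ, hρ, h⟩ := Metric.uniformContinuousOn_iff.1
    (isCompact_Icc.uniformContinuousOn_of_continuous hf) ε hε
  filter_upwards [Ioo_mem_nhdsGT hρ] with δ hδ r hr hrδ
  refine h _ hrδ _ hr ?_
  rw [Real.dist_eq, add_sub_cancel_left, abs_of_pos hδ.1]
  exact hδ.2

lemma McCannPair.exists_smoothMcCannPair_mem_Icc (h : McCannPair α c H₀ P p m m') (hα : 0 ≤ α)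
    (hb : 0 < b) (hbc : b < c) {ε : ℝ} (hε : 0 < ε) :
    ∃ P₁ p₁ m₁ m₁' H₁, SmoothMcCannPair α b H₁ P₁ p₁ m₁ m₁' ∧
      (∀ r ∈ Icc 0 b, P₁ r ∈ Icc (P r) (P r + ε)) ∧ ∀ r ∈ Icc 0 b, m₁ r ∈ Icc (m r) (m r + ε) := by
  have hε₃ : 0 < ε / 3 := by positivity
  have hc : 0 ≤ c := (hb.trans hbc).le
  have hδ_small : ∀ᶠ δ in 𝓝[>] (0 : ℝ), δ ∈ Ioo 0 (c - b) := Ioo_mem_nhdsGT (sub_pos.2 hbc)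
  obtain ⟨δ, ⟨hδ, hδc⟩, hmδ, hPδ⟩ := (hδ_small.and
    ((eventually_abs_comp_add_sub_lt h.continuousOn_mobility hε₃).and
      (eventually_abs_comp_add_sub_lt (h.continuousOn_pressure hc) hε₃))).exists
  obtain ⟨H₁, g, hdata, hg⟩ := h.exists_shift (η := ε / 3) hα hb.le hδ (lt_sub_iff_add_lt'.1 hδc)
    hε₃.le
  obtain ⟨Pₙ, pₙ, mₙ, mₙ', Hₙ, hsmooth, hP, hm⟩ := hdata.exists_smoothMcCannPair hb hα (P δ)
  obtain ⟨n, hPn, hmn⟩ := ((hP.eventually_le_add hε₃).and (hm.eventually_le_add hε₃)).exists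
  have hr_mem {r : ℝ} (hr : r ∈ Icc 0 b) : r ∈ Icc 0 c ∧ r + δ ∈ Icc 0 c :=
    ⟨⟨hr.1, hr.2.trans hbc.le⟩, by linarith [hr.1], by linarith [hr.2]⟩
  refine ⟨Pₙ n, pₙ n, mₙ n, mₙ' n, Hₙ n, hsmooth n, fun r hr => ?_, fun r hr => ?_⟩
  all_goals obtain ⟨hrc, hrδ⟩ := hr_mem hr
  · have hPr := h.primitive_shift_pressure ⟨hδ.le, by linarith⟩ hrδ
    have hmono := h.monotoneOn_pressure hα hrc hrδ (by linarith)
    have hclose := abs_lt.1 (hPδ r hrc hrδ)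
    have hle := hP.le n hr
    have hge := hPn r hr
    rw [hPr] at hle hge
    constructor <;> linarith
  · have hclose := abs_lt.1 (hmδ r hrc hrδ)
    have hle := hm.le n hr
    have hge := hmn r hr
    rw [hg r hr] at hle hge
    constructor <;> linarith

theorem stmt_11_general (hα : 0 ≤ α) (hb : 0 < b) (hbc : b < c)
    (h : McCannPair α c H₀ P p m m') :
    ∃ (Pₙ pₙ mₙ mₙ' : ℕ → ℝ → ℝ) (Hₙ : ℕ → ℝ),
      (∀ n, SmoothMcCannPair α b (Hₙ n) (Pₙ n) (pₙ n) (mₙ n) (mₙ' n)) ∧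
      TendstoFromAbove b Pₙ P ∧ TendstoFromAbove b mₙ m := by
  choose Pₙ pₙ mₙ mₙ' Hₙ hsmooth hP hm using fun n : ℕ =>
    h.exists_smoothMcCannPair_mem_Icc hα hb hbc (Nat.one_div_pos_of_nat (α := ℝ) (n := n))
  exact ⟨Pₙ, pₙ, mₙ, mₙ', Hₙ, hsmooth, ⟨_, tendsto_one_div_add_atTop_nhds_zero_nat, hP⟩,
    ⟨_, tendsto_one_div_add_atTop_nhds_zero_nat, hm⟩⟩

end Approximation

section SetIntegral

variable {α c H₀ : ℝ} {P p m m' : ℝ → ℝ}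

lemma eqOn_zero_of_not_integrableOn (hc : 0 ≤ c) (hP_mono : MonotoneOn P (Icc 0 c))
    (hP : ∀ r ∈ Icc 0 c, P r = ∫ z in Ioc 0 r, p z) (hp : ¬IntegrableOn p (Ioc 0 c)) :
    EqOn P 0 (Icc 0 c) := by
  have h0 : (0 : ℝ) ∈ Icc 0 c := left_mem_Icc.2 hc
  have hc' : c ∈ Icc 0 c := right_mem_Icc.2 hc
  have hP0 : P 0 = 0 := by simp [hP 0 h0]
  have hPc : P c = 0 := (hP c hc').trans (integral_undef hp)
  exact fun r hr => le_antisymm ((hP_mono hr hc' hr.2).trans_eq hPc)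
    (hP0.symm.trans_le (hP_mono h0 hr hr.1))

lemma exists_mcCannPair_of_setIntegral {b : ℝ} {M : ℝ≥0∞} (hb : 0 ≤ b) (hbM : ENNReal.ofReal b < M)
    (hm_cont : ContinuousOn m {r : ℝ | 0 ≤ r ∧ ENNReal.ofReal r < M})
    (hm_conc : ConcaveOn ℝ {r : ℝ | 0 ≤ r ∧ ENNReal.ofReal r < M} m)
    (hm_pos : ∀ r : ℝ, 0 < r → ENNReal.ofReal r < M → 0 < m r)
    (hm_deriv : ∀ᵐ r ∂volume.restrict {r : ℝ | 0 < r ∧ ENNReal.ofReal r < M},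
      HasDerivAt m (m' r) r)
    (hP_mono : MonotoneOn P {r : ℝ | 0 ≤ r ∧ ENNReal.ofReal r < M})
    (hP : ∀ r : ℝ, 0 ≤ r → ENNReal.ofReal r < M → P r = ∫ z in Ioc 0 r, p z)
    (hpm : ∀ r : ℝ, 0 ≤ r → ENNReal.ofReal r < M → IntegrableOn (fun z => p z * m' z) (Ioc 0 r))
    (hgmc : ∀ᵐ r ∂volume.restrict {r : ℝ | 0 < r ∧ ENNReal.ofReal r < M},
      p r * m r ≥ α * (H₀ + ∫ z in Ioc 0 r, p z * m' z) ∧ 0 ≤ H₀ + ∫ z in Ioc 0 r, p z * m' z) :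
    ∃ c H₁ q, b < c ∧ McCannPair α c H₁ P q m m' := by
  obtain ⟨c, hc, hbc', hcM⟩ := ENNReal.lt_iff_exists_real_btwn.1 hbM
  have hbc : b < c := (ENNReal.ofReal_lt_ofReal_iff_of_nonneg hb).1 hbc'
  have hIcc : Icc 0 c ⊆ {r : ℝ | 0 ≤ r ∧ ENNReal.ofReal r < M} := fun r hr =>
    ⟨hr.1, (ENNReal.ofReal_le_ofReal hr.2).trans_lt hcM⟩
  have hIoo : Ioo 0 c ⊆ {r : ℝ | 0 < r ∧ ENNReal.ofReal r < M} := fun r hr =>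
    ⟨hr.1, (hIcc (Ioo_subset_Icc_self hr)).2⟩
  replace hm_cont := hm_cont.mono hIcc
  replace hm_conc := hm_conc.subset hIcc (convex_Icc 0 c)
  replace hm_pos : ∀ r ∈ Ioo 0 c, 0 < m r := fun r hr => hm_pos r hr.1 (hIoo hr).2
  replace hm_deriv := (ae_restrict_iff' measurableSet_Ioo).1
    (ae_restrict_of_ae_restrict_of_subset hIoo hm_deriv)
  replace hgmc := (ae_restrict_iff' measurableSet_Ioo).1
    (ae_restrict_of_ae_restrict_of_subset hIoo hgmc)
  replace hP : ∀ r ∈ Icc 0 c, P r = ∫ z in Ioc 0 r, p z := fun r hr => hP r hr.1 (hIcc hr).2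
  have hP0 : P 0 = 0 := by simp [hP 0 (left_mem_Icc.2 hc)]
  by_cases hp : IntegrableOn p (Ioc 0 c)
  · refine ⟨c, H₀, p, hbc, hm_cont, hm_conc, hm_pos, hm_deriv,
      (intervalIntegrable_iff_integrableOn_Ioc_of_le hc).2 hp,
      (intervalIntegrable_iff_integrableOn_Ioc_of_le hc).2 (hpm c hc hcM), fun r hr => ?_, ?_⟩
    · rw [primitive, hP0, zero_add, intervalIntegral.integral_of_le hr.1, hP r hr]
    · filter_upwards [hgmc] with r hr hrc
      simpa only [McCannAt, primitive, intervalIntegral.integral_of_le hrc.1.le] using hr hrc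
  -- The integral of a non-integrable function is `0`, so here `P` vanishes and has density `0`.
  · refine ⟨c, 0, fun _ => 0, hbc, hm_cont, hm_conc, hm_pos, hm_deriv, by simp, by simp,
      fun r hr => ?_, .of_forall fun r _ => by simp [McCannAt, primitive]⟩
    simp [primitive, hP0, eqOn_zero_of_not_integrableOn hc (hP_mono.mono hIcc) hP hp hr]

lemma SmoothMcCannPair.ae_setIntegral (h : SmoothMcCannPair α c H₀ P p m m') :
    ∀ᵐ r ∂volume.restrict (Ioo 0 c),
      p r * m r ≥ α * (H₀ + ∫ z in Ioc 0 r, p z * m' z) ∧ 0 ≤ H₀ + ∫ z in Ioc 0 r, p z * m' z := by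
  refine ae_restrict_of_forall_mem measurableSet_Ioo fun r hr => ?_
  simpa only [McCannAt, primitive, intervalIntegral.integral_of_le hr.1.le] using h.mcCannAt r hr

end SetIntegral

/-- Smoothing lemma for the generalized McCann condition: if `P` (encoded
through a density `p` with `P r = ∫₀^r p`) satisfies `GMC(m,d)` on `(0,M)`,
and `0 ≤ M' < M'' < M` with either `M' > 0` or (`M' = 0` and) `p = P'`
integrable near `0`, then there exist sequences `Pₙ ≥ P` strictly increasing
and `mₙ ≥ m` concave on `[0,M'']`, smooth on `[M',M'']`, still satisfying
`GMC(mₙ,d)` on `(0,M'')` (for suitable `H₀ₙ ≥ 0`), with `Pₙ → P` and `mₙ → m`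
uniformly on `[M',M'']`. -/
theorem stmt_11 (d : ℕ) (hd : 1 ≤ d) (M : ℝ≥0∞) (hM : 0 < M)
    (m m' : ℝ → ℝ)
    (hm_cont : ContinuousOn m {r : ℝ | 0 ≤ r ∧ ENNReal.ofReal r < M})
    (hm_conc : ConcaveOn ℝ {r : ℝ | 0 ≤ r ∧ ENNReal.ofReal r < M} m)
    (hm_pos : ∀ r : ℝ, 0 < r → ENNReal.ofReal r < M → 0 < m r)
    (hm_deriv : ∀ᵐ r ∂(volume.restrict {r : ℝ | 0 < r ∧ ENNReal.ofReal r < M}),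
      HasDerivAt m (m' r) r)
    (P p : ℝ → ℝ)
    (hPmono : MonotoneOn P {r : ℝ | 0 ≤ r ∧ ENNReal.ofReal r < M})
    (hP : ∀ r : ℝ, 0 ≤ r → ENNReal.ofReal r < M → P r = ∫ z in Ioc 0 r, p z)
    (hint : ∀ r : ℝ, 0 ≤ r → ENNReal.ofReal r < M →
      IntegrableOn (fun z => p z * m' z) (Ioc 0 r))
    (H0 : ℝ) (hH0 : 0 ≤ H0)
    (hgmc : ∀ᵐ r ∂(volume.restrict {r : ℝ | 0 < r ∧ ENNReal.ofReal r < M}),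
      p r * m r ≥ (1 - 1 / (d : ℝ)) * (H0 + ∫ z in Ioc 0 r, p z * m' z) ∧
      0 ≤ H0 + ∫ z in Ioc 0 r, p z * m' z)
    (M' M'' : ℝ) (hM'0 : 0 ≤ M') (hM'M'' : M' < M'')
    (hM'' : ENNReal.ofReal M'' < M)
    (hM' : 0 < M' ∨ ∃ ε : ℝ, 0 < ε ∧ IntegrableOn p (Ioc 0 ε)) :
    ∃ (Pn mn pn mn' : ℕ → ℝ → ℝ) (H0n : ℕ → ℝ),
      (∀ n : ℕ,
        (∀ r ∈ Icc 0 M'', P r ≤ Pn n r) ∧ StrictMonoOn (Pn n) (Icc 0 M'') ∧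
        (∀ r ∈ Icc 0 M'', m r ≤ mn n r) ∧ ConcaveOn ℝ (Icc 0 M'') (mn n) ∧
        ContDiffOn ℝ (⊤ : ℕ∞) (Pn n) (Icc M' M'') ∧ ContDiffOn ℝ (⊤ : ℕ∞) (mn n) (Icc M' M'') ∧
        0 ≤ H0n n ∧
        (∀ᵐ r ∂(volume.restrict (Ioo 0 M'')),
          HasDerivAt (Pn n) (pn n r) r ∧ HasDerivAt (mn n) (mn' n r) r) ∧
        (∀ᵐ r ∂(volume.restrict (Ioo 0 M'')),
          pn n r * mn n r ≥
            (1 - 1 / (d : ℝ)) * (H0n n + ∫ z in Ioc 0 r, pn n z * mn' n z) ∧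
          0 ≤ H0n n + ∫ z in Ioc 0 r, pn n z * mn' n z)) ∧
      TendstoUniformlyOn (fun n => Pn n) P Filter.atTop (Icc M' M'') ∧
      TendstoUniformlyOn (fun n => mn n) m Filter.atTop (Icc M' M'') := by
  have hb : 0 < M'' := hM'0.trans_lt hM'M''
  obtain ⟨c, H₁, q, hbc, hpair⟩ := exists_mcCannPair_of_setIntegral hb.le hM'' hm_cont hm_conc
    hm_pos hm_deriv hPmono hP hint hgmc
  obtain ⟨Pₙ, pₙ, mₙ, mₙ', Hₙ, hsmooth, hPₙ, hmₙ⟩ :=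
    stmt_11_general (Nat.one_sub_one_div_cast_nonneg d) hb hbc hpair
  have hsub : Icc M' M'' ⊆ Icc 0 M'' := Icc_subset_Icc_left hM'0
  exact ⟨Pₙ, mₙ, pₙ, mₙ', Hₙ, fun n => ⟨fun r => hPₙ.le n, (hsmooth n).strictMonoOn,
    fun r => hmₙ.le n, (hsmooth n).concaveOn, (hsmooth n).contDiffOn_pressure.mono hsub,
    (hsmooth n).contDiffOn_mobility.mono hsub, (hsmooth n).const_nonneg,
    ae_restrict_of_forall_mem measurableSet_Ioo fun r hr =>
      ⟨(hsmooth n).hasDerivAt_pressure r hr, (hsmooth n).hasDerivAt_mobility r hr⟩,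
    (hsmooth n).ae_setIntegral⟩,
    hPₙ.tendstoUniformlyOn.mono hsub, hmₙ.tendstoUniformlyOn.mono hsub⟩
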